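/- Let μ be a compactly supported Borel measure on ℝ^d, d ≥ 2, and suppose I_s(μ) < ∞ for some s > (d+1)/2. Then the Mattila integral of μ is finite: ∫_0^∞ ( ∫_{S^{d−1}} |μ̂(tω)|² dω )² t^{d−1} dt < ∞. -/

import Mathlib

open MeasureTheory Metric Set Topology
open scoped ENNReal

noncomputable section

/-- `ℝ^d` as Euclidean space. -/
abbrev Pt (d : ℕ) := EuclideanSpace ℝ (Fin d)

/-- The Fourier transform `μ̂(ξ) = ∫ e^{-2πi x·ξ} dμ(x)` of a measure `μ` on `ℝ^d`. -/
def ftM (d : ℕ) (μ : Measure (Pt d)) (ξ : Pt d) : ℂ :=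
  ∫ x, Complex.exp ((-(2 * Real.pi * (inner ℝ x ξ : ℝ)) : ℝ) * Complex.I) ∂μ

/-- The `s`-energy `I_s(μ) = ∬ |x-y|^{-s} dμ(x) dμ(y)` of a measure `μ`. -/
def energy (d : ℕ) (s : ℝ) (μ : Measure (Pt d)) : ℝ≥0∞ :=
  ∫⁻ x, ∫⁻ y, edist x y ^ (-s) ∂μ ∂μ

/-- The surface measure `dω` on the unit sphere `S^{d-1} ⊆ ℝ^d`. -/
def sphM (d : ℕ) : Measure (sphere (0 : Pt d) 1) :=
  (volume : Measure (Pt d)).toSphere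

/-- The spherical `L²` average `∫_{S^{d-1}} |μ̂(tω)|² dω` (as a lower integral). -/
def sphAvg (d : ℕ) (μ : Measure (Pt d)) (t : ℝ) : ℝ≥0∞ :=
  ∫⁻ ω, (‖ftM d μ (t • (ω : Pt d))‖₊ : ℝ≥0∞) ^ 2 ∂(sphM d)

/-- The Mattila integral `∫_0^∞ (∫_{S^{d-1}} |μ̂(tω)|² dω)² t^{d-1} dt`. -/
def mattila (d : ℕ) (μ : Measure (Pt d)) : ℝ≥0∞ :=
  ∫⁻ t in Ioi (0 : ℝ), (sphAvg d μ t) ^ 2 * ENNReal.ofReal (t ^ ((d : ℝ) - 1))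

/-!
By Gaussian subordination, the `s`-energy of `μ` controls `∫ |μ̂(ξ)|² |ξ|^(s-d) dξ` for
`0 < s < d`. The same bound applied to the vector-valued measure `x μ` controls the gradient
of `μ̂`. In polar coordinates this says `∫ t^(s-1) Φ(t) dt < ∞`, where `Φ(t)` is the
integral of `2 |μ̂|² + |∇μ̂|²` over directions at radius `t`. A one-dimensional Sobolev
inequality along rays bounds the spherical average `S(t)` by `∫_t^(t+1) Φ`, hence
`t^(s-1) S(t)` is bounded. Multiplying this decay by `∫ t^(s-1) S(t) dt < ∞` gives
`∫ t^(2(s-1)) S(t)² dt < ∞`, and `2(s-1) ≥ d-1` is the condition `s ≥ (d+1)/2`.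
-/

open scoped FourierTransform RealInnerProductSpace

section GammaIntegrals

lemma lintegral_ofReal_of_integral_eq {α : Type*} [MeasurableSpace α] {μ : Measure α}
    {g : α → ℝ} {c : ℝ} (hg : 0 ≤ᵐ[μ] g) (hc : c ≠ 0) (hgc : ∫ x, g x ∂μ = c) :
    ∫⁻ x, ENNReal.ofReal (g x) ∂μ = ENNReal.ofReal c := by
  have hint : Integrable g μ := not_imp_comm.1 integral_undef (hgc ▸ hc)
  rw [← hgc, ofReal_integral_eq_lintegral_ofReal hint hg]

variable {a r : ℝ}

lemma lintegral_rpow_mul_exp_neg_mul_Ioi (ha : 0 < a) (hr : 0 < r) :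
    ∫⁻ b in Ioi (0 : ℝ), ENNReal.ofReal (b ^ (a - 1) * Real.exp (-(r * b))) =
      ENNReal.ofReal (Real.Gamma a * r ^ (-a)) := by
  refine lintegral_ofReal_of_integral_eq ?_
    (mul_pos (Real.Gamma_pos_of_pos ha) (Real.rpow_pos_of_pos hr _)).ne' ?_
  · filter_upwards [ae_restrict_mem measurableSet_Ioi] with b hb
    exact mul_nonneg (Real.rpow_nonneg (mem_Ioi.1 hb).le _) (Real.exp_pos _).le
  · rw [Real.integral_rpow_mul_exp_neg_mul_Ioi ha hr, one_div, Real.inv_rpow hr.le,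
      Real.rpow_neg hr.le, mul_comm]

lemma lintegral_rpow_mul_exp_neg_div_Ioi (ha : 0 < a) (hr : 0 < r) :
    ∫⁻ b in Ioi (0 : ℝ), ENNReal.ofReal (b ^ (-a - 1) * Real.exp (-(r / b))) =
      ENNReal.ofReal (Real.Gamma a * r ^ (-a)) := by
  refine lintegral_ofReal_of_integral_eq ?_
    (mul_pos (Real.Gamma_pos_of_pos ha) (Real.rpow_pos_of_pos hr _)).ne' ?_
  · filter_upwards [ae_restrict_mem measurableSet_Ioi] with b hb
    exact mul_nonneg (Real.rpow_nonneg (mem_Ioi.1 hb).le _) (Real.exp_pos _).le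
  have hinv := integral_comp_rpow_Ioi (fun b ↦ b ^ (a - 1) * Real.exp (-(r * b)))
    (neg_ne_zero.2 one_ne_zero)
  rw [Real.integral_rpow_mul_exp_neg_mul_Ioi ha hr, one_div, Real.inv_rpow hr.le,
    ← Real.rpow_neg hr.le, mul_comm] at hinv
  rw [← hinv]
  refine setIntegral_congr_fun measurableSet_Ioi fun b (hb : 0 < b) ↦ ?_
  have hpow : b ^ (-a - 1) = b ^ (-1 - 1 : ℝ) * (b ^ (-1 : ℝ)) ^ (a - 1) := by
    rw [← Real.rpow_mul hb.le, ← Real.rpow_add hb]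
    ring_nf
  simp only [hpow, abs_neg, abs_one, one_mul, smul_eq_mul, Real.rpow_neg_one, div_eq_mul_inv,
    mul_assoc]

end GammaIntegrals

lemma lintegral_lintegral_withDensity {α : Type*} [MeasurableSpace α] {μ : Measure α}
    {w : α → ℝ≥0∞} (hw : AEMeasurable w μ) (hw_top : ∀ᵐ x ∂μ, w x < ⊤) (k : α → α → ℝ≥0∞) :
    ∫⁻ x, ∫⁻ y, k x y ∂μ.withDensity w ∂μ.withDensity w =
      ∫⁻ x, w x * ∫⁻ y, w y * k x y ∂μ ∂μ := by
  simp only [lintegral_withDensity_eq_lintegral_mul_non_measurable₀ μ hw hw_top, Pi.mul_apply]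

section GaussianFourier

variable {V : Type*} [NormedAddCommGroup V]

lemma ofReal_exp_neg_pi_mul_sq_norm_div (b : ℝ) (ξ : V) :
    (Real.exp (-(Real.pi * ‖ξ‖ ^ 2 / b)) : ℂ) =
      Complex.exp (-((Real.pi / b : ℝ) : ℂ) * ‖ξ‖ ^ 2) := by
  push_cast
  ring_nf

variable [InnerProductSpace ℝ V] [FiniteDimensional ℝ V] [MeasurableSpace V] [BorelSpace V]
  {b : ℝ}

lemma integrable_exp_neg_pi_mul_sq_norm_div (hb : 0 < b) :
    Integrable fun ξ : V ↦ Real.exp (-(Real.pi * ‖ξ‖ ^ 2 / b)) := by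
  have hcexp : Integrable fun ξ : V ↦ (Real.exp (-(Real.pi * ‖ξ‖ ^ 2 / b)) : ℂ) := by
    simpa only [ofReal_exp_neg_pi_mul_sq_norm_div, zero_mul, add_zero] using
      GaussianFourier.integrable_cexp_neg_mul_sq_norm_add
        (show 0 < ((Real.pi / b : ℝ) : ℂ).re from div_pos Real.pi_pos hb) 0 (0 : V)
  exact hcexp.re

lemma enorm_fourier_exp_neg_pi_mul_sq_norm_div (hb : 0 < b) (w : V) :
    ‖𝓕 (fun ξ : V ↦ (Real.exp (-(Real.pi * ‖ξ‖ ^ 2 / b)) : ℂ)) w‖ₑ =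
      ENNReal.ofReal (b ^ (Module.finrank ℝ V / 2 : ℝ)) *
        ENNReal.ofReal (Real.exp (-(Real.pi * ‖w‖ ^ 2 * b))) := by
  have hscale : (Real.pi : ℂ) / (Real.pi / b : ℝ) = (b : ℝ) := by
    push_cast
    field_simp [Real.pi_ne_zero, hb.ne']
  have hexponent : -(Real.pi : ℂ) ^ 2 * ‖w‖ ^ 2 / (Real.pi / b : ℝ) =
      (-(Real.pi * ‖w‖ ^ 2 * b) : ℝ) := by
    push_cast
    field_simp [Real.pi_ne_zero, hb.ne']
  simp only [ofReal_exp_neg_pi_mul_sq_norm_div]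
  rw [fourier_gaussian_innerProductSpace (div_pos Real.pi_pos hb), hscale, hexponent, enorm_mul,
    ← ofReal_norm, ← ofReal_norm, Complex.norm_exp_ofReal, Complex.norm_cpow_eq_rpow_re_of_pos hb]
  norm_num

end GaussianFourier

section FourierDensity

variable {V F : Type*} [NormedAddCommGroup V] [InnerProductSpace ℝ V] [MeasurableSpace V]
  [NormedAddCommGroup F] [InnerProductSpace ℂ F]

/-- The Fourier transform `ξ ↦ ∫ e^{-2πi x·ξ} f(x) dμ(x)` of the vector-valued measure `f μ`. -/
def fourierDensity (μ : Measure V) (f : V → F) : V → F :=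
  VectorFourier.fourierIntegral 𝐞 μ (innerₗ V) f

lemma norm_fourierDensity_le (μ : Measure V) (f : V → F) (ξ : V) :
    ‖fourierDensity μ f ξ‖ ≤ ∫ x, ‖f x‖ ∂μ :=
  VectorFourier.norm_fourierIntegral_le_integral_norm 𝐞 μ (innerₗ V) f ξ

lemma enorm_fourierDensity_le (μ : Measure V) (f : V → F) (ξ : V) :
    ‖fourierDensity μ f ξ‖ₑ ≤ ∫⁻ x, ‖f x‖ₑ ∂μ := by
  refine (enorm_integral_le_lintegral_enorm _).trans_eq (lintegral_congr fun x ↦ ?_)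
  rw [enorm_eq_iff_norm_eq, Circle.norm_smul]

variable [BorelSpace V] {μ : Measure V} {f : V → F}

lemma continuous_fourierDensity (hf : Integrable f μ) : Continuous (fourierDensity μ f) :=
  VectorFourier.fourierIntegral_continuous Real.continuous_fourierChar
    (L := innerₗ V) continuous_inner hf

lemma inner_fourierDensity [CompleteSpace F] (hf : Integrable f μ) (c : F) (ξ : V) :
    inner ℂ c (fourierDensity μ f ξ) = fourierDensity μ (fun x ↦ inner ℂ c (f x)) ξ := by
  have hint : Integrable (fun x ↦ 𝐞 (-⟪x, ξ⟫) • f x) μ :=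
    (VectorFourier.fourierIntegral_convergent_iff (L := innerₗ V)
      Real.continuous_fourierChar continuous_inner ξ).2 hf
  refine (integral_inner hint c).symm.trans (integral_congr_ae (.of_forall fun x ↦ ?_))
  simp only [Circle.smul_def, inner_smul_right, smul_eq_mul, innerₗ_apply_apply]

lemma hasDerivAt_fourierDensity_smul [SecondCountableTopology V] (hf : Integrable f μ)
    (hf' : Integrable (fun x ↦ ‖x‖ * ‖f x‖) μ) (ω : V) (u : ℝ) :
    HasDerivAt (fun u : ℝ ↦ fourierDensity μ f (u • ω))
      (-(2 * Real.pi * Complex.I) • fourierDensity μ (fun x ↦ ⟪x, ω⟫ • f x) (u • ω)) u := by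
  have hray : HasDerivAt (fun u : ℝ ↦ u • ω) ω u := by
    simpa only [id_eq, one_smul] using (hasDerivAt_id u).smul_const ω
  have hint : Integrable (VectorFourier.fourierSMulRight (innerSL ℝ) f) μ := by
    refine (hf'.const_mul (2 * Real.pi)).mono' hf.1.fourierSMulRight (.of_forall fun x ↦ ?_)
    rw [VectorFourier.norm_fourierSMulRight, innerSL_apply_norm, mul_assoc]
  convert! (VectorFourier.hasFDerivAt_fourierIntegral (innerSL ℝ) hf hf'
    (u • ω)).comp_hasDerivAt u hray using 1
  rw [Real.fourierIntegral_continuousLinearMap_apply' hint]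
  exact (congrFun (VectorFourier.fourierIntegral_const_smul 𝐞 μ (innerₗ V)
    (fun x ↦ ⟪x, ω⟫ • f x) _) (u • ω)).symm

variable [FiniteDimensional ℝ V]

lemma fourier_fourierChar_smul (g : V → ℂ) (x y : V) :
    𝓕 (fun ξ ↦ 𝐞 ⟪x, ξ⟫ • g ξ) y = 𝓕 g (y - x) := by
  simp only [Real.fourier_eq, smul_smul, ← AddChar.map_add_eq_mul, inner_sub_right,
    real_inner_comm x]
  ring_nf

variable [SigmaFinite μ] [CompleteSpace F] {g : V → ℂ}

lemma integral_smul_fourierDensity (hg : Integrable g) (hf : Integrable f μ) :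
    ∫ ξ, g ξ • fourierDensity μ f ξ = ∫ y, 𝓕 g y • f y ∂μ := by
  have hadjoint := VectorFourier.integral_fourierIntegral_smul_eq_flip (L := innerₗ V)
    Real.continuous_fourierChar continuous_inner hg hf
  rw [flip_innerₗ] at hadjoint
  exact hadjoint.symm

lemma integral_inner_smul_fourierDensity (hg : Integrable g) (hf : Integrable f μ) :
    ∫ ξ, inner ℂ (fourierDensity μ f ξ) (g ξ • fourierDensity μ f ξ) =
      ∫ x, inner ℂ (f x) (∫ y, 𝓕 g (y - x) • f y ∂μ) ∂μ := by
  have hgf : Integrable fun ξ ↦ g ξ • fourierDensity μ f ξ :=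
    hg.smul_bdd _ (continuous_fourierDensity hf).aestronglyMeasurable
      (.of_forall (norm_fourierDensity_le μ f))
  have hmodulated (x : V) : Integrable fun ξ ↦ 𝐞 ⟪x, ξ⟫ • g ξ := by
    simpa only [inner_neg_right, neg_neg, real_inner_comm] using
      (Real.fourierIntegral_convergent_iff (-x)).2 hg
  have hsesq := VectorFourier.integral_sesq_fourierIntegral_eq_neg_flip (L := innerₗ V)
    (innerSL ℂ) Real.continuous_fourierChar continuous_inner hf hgf
  refine hsesq.trans (integral_congr_ae (.of_forall fun x ↦ ?_))
  simp only [← fourier_fourierChar_smul, ← integral_smul_fourierDensity (hmodulated x) hf,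
    VectorFourier.fourierIntegral, flip_innerₗ, LinearMap.neg_apply, innerₗ_apply_apply,
    neg_neg, smul_assoc, real_inner_comm x, innerSL_apply_apply]

lemma lintegral_enorm_fourierDensity_sq_mul_le {g : V → ℝ} (hg₀ : ∀ ξ, 0 ≤ g ξ)
    (hg : Integrable g) (hf : Integrable f μ) :
    ∫⁻ ξ, ‖fourierDensity μ f ξ‖ₑ ^ 2 * ENNReal.ofReal (g ξ) ≤
      ∫⁻ x, ‖f x‖ₑ * ∫⁻ y, ‖f y‖ₑ * ‖𝓕 (fun ξ ↦ (g ξ : ℂ)) (y - x)‖ₑ ∂μ ∂μ := by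
  have hgC : Integrable fun ξ ↦ (g ξ : ℂ) := hg.ofReal
  let h ξ := g ξ * ‖fourierDensity μ f ξ‖ ^ 2
  have hinner (ξ : V) :
      inner ℂ (fourierDensity μ f ξ) ((g ξ : ℂ) • fourierDensity μ f ξ) = (h ξ : ℂ) := by
    rw [inner_smul_right, inner_self_eq_norm_sq_to_K]
    push_cast [h]
    rfl
  have hint : Integrable h := by
    refine hg.mul_bdd (c := (∫ x, ‖f x‖ ∂μ) ^ 2)
      ((continuous_fourierDensity hf).norm.pow 2).aestronglyMeasurable (.of_forall fun ξ ↦ ?_)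
    rw [norm_pow, norm_norm]
    gcongr
    exact norm_fourierDensity_le μ f ξ
  calc ∫⁻ ξ, ‖fourierDensity μ f ξ‖ₑ ^ 2 * ENNReal.ofReal (g ξ)
    _ = ∫⁻ ξ, ENNReal.ofReal (h ξ) := by
      refine lintegral_congr fun ξ ↦ ?_
      rw [ENNReal.ofReal_mul (hg₀ ξ), ENNReal.ofReal_pow (norm_nonneg _), ofReal_norm, mul_comm]
    _ = ‖∫ ξ, (h ξ : ℂ)‖ₑ := by
      have hh₀ (ξ : V) : 0 ≤ h ξ := mul_nonneg (hg₀ ξ) (sq_nonneg _)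
      rw [← ofReal_integral_eq_lintegral_ofReal hint (.of_forall hh₀), integral_complex_ofReal,
        ← ofReal_norm, Complex.norm_of_nonneg (integral_nonneg hh₀)]
    _ = ‖∫ x, inner ℂ (f x) (∫ y, 𝓕 (fun ξ ↦ (g ξ : ℂ)) (y - x) • f y ∂μ) ∂μ‖ₑ := by
      rw [← integral_inner_smul_fourierDensity hgC hf]
      exact congrArg _ (integral_congr_ae (.of_forall fun ξ ↦ (hinner ξ).symm))
    _ ≤ ∫⁻ x, ‖f x‖ₑ * ∫⁻ y, ‖f y‖ₑ * ‖𝓕 (fun ξ ↦ (g ξ : ℂ)) (y - x)‖ₑ ∂μ ∂μ := by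
      refine (enorm_integral_le_lintegral_enorm _).trans (lintegral_mono fun x ↦ ?_)
      calc ‖inner ℂ (f x) (∫ y, 𝓕 (fun ξ ↦ (g ξ : ℂ)) (y - x) • f y ∂μ)‖ₑ
        _ ≤ ‖f x‖ₑ * ‖∫ y, 𝓕 (fun ξ ↦ (g ξ : ℂ)) (y - x) • f y ∂μ‖ₑ := by
          simp only [enorm_eq_nnnorm]
          exact_mod_cast nnnorm_inner_le_nnnorm (𝕜 := ℂ) (f x) _
        _ ≤ ‖f x‖ₑ * ∫⁻ y, ‖f y‖ₑ * ‖𝓕 (fun ξ ↦ (g ξ : ℂ)) (y - x)‖ₑ ∂μ := by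
          refine mul_right_mono ((enorm_integral_le_lintegral_enorm _).trans_eq ?_)
          simp only [enorm_smul, mul_comm]

lemma lintegral_enorm_fourierDensity_sq_mul_gaussian_le (hf : Integrable f μ) {b : ℝ}
    (hb : 0 < b) :
    ∫⁻ ξ, ‖fourierDensity μ f ξ‖ₑ ^ 2 * ENNReal.ofReal (Real.exp (-(Real.pi * ‖ξ‖ ^ 2 / b))) ≤
      ENNReal.ofReal (b ^ (Module.finrank ℝ V / 2 : ℝ)) * ∫⁻ x, ∫⁻ y,
        ENNReal.ofReal (Real.exp (-(Real.pi * ‖x - y‖ ^ 2 * b)))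
          ∂μ.withDensity (‖f ·‖ₑ) ∂μ.withDensity (‖f ·‖ₑ) := by
  refine (lintegral_enorm_fourierDensity_sq_mul_le (fun ξ ↦ (Real.exp_pos _).le)
    (integrable_exp_neg_pi_mul_sq_norm_div hb) hf).trans_eq ?_
  rw [lintegral_lintegral_withDensity hf.1.enorm (.of_forall fun _ ↦ enorm_lt_top)]
  simp only [enorm_fourier_exp_neg_pi_mul_sq_norm_div hb, fun x y : V ↦ norm_sub_rev y x]
  rw [← lintegral_const_mul' _ _ ENNReal.ofReal_ne_top]
  refine lintegral_congr fun x ↦ ?_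
  rw [mul_left_comm, ← lintegral_const_mul' _ _ ENNReal.ofReal_ne_top]
  simp only [mul_left_comm]

end FourierDensity

section GaussianSubordination

variable {E : Type*} [NormedAddCommGroup E] {a : ℝ}

lemma ofReal_pi_mul_sq_norm_rpow_neg {x : E} (hx : x ≠ 0) (c : ℝ) :
    ENNReal.ofReal (c * (Real.pi * ‖x‖ ^ 2) ^ (-a)) =
      ENNReal.ofReal (c * Real.pi ^ (-a)) * ‖x‖ₑ ^ (-(2 * a)) := by
  have hx' : 0 < ‖x‖ := norm_pos_iff.2 hx
  rw [← ofReal_norm, ENNReal.ofReal_rpow_of_pos hx', ← ENNReal.ofReal_mul' (by positivity),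
    Real.mul_rpow Real.pi_pos.le (by positivity), ← Real.rpow_natCast, ← Real.rpow_mul hx'.le,
    mul_assoc]
  norm_num

lemma lintegral_rpow_mul_gaussian_div (ha : 0 < a) {x : E} (hx : x ≠ 0) :
    ∫⁻ b in Ioi (0 : ℝ), ENNReal.ofReal (b ^ (-a - 1)) *
        ENNReal.ofReal (Real.exp (-(Real.pi * ‖x‖ ^ 2 / b))) =
      ENNReal.ofReal (Real.Gamma a * Real.pi ^ (-a)) * ‖x‖ₑ ^ (-(2 * a)) := by
  have hr : 0 < Real.pi * ‖x‖ ^ 2 := by positivity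
  rw [← ofReal_pi_mul_sq_norm_rpow_neg hx, ← lintegral_rpow_mul_exp_neg_div_Ioi ha hr]
  exact lintegral_congr fun b ↦ (ENNReal.ofReal_mul' (Real.exp_pos _).le).symm

lemma lintegral_rpow_mul_gaussian_mul_le (ha : 0 < a) (x : E) :
    ∫⁻ b in Ioi (0 : ℝ), ENNReal.ofReal (b ^ (a - 1)) *
        ENNReal.ofReal (Real.exp (-(Real.pi * ‖x‖ ^ 2 * b))) ≤
      ENNReal.ofReal (Real.Gamma a * Real.pi ^ (-a)) * ‖x‖ₑ ^ (-(2 * a)) := by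
  rcases eq_or_ne x 0 with rfl | hx
  · have hconst : 0 < Real.Gamma a * Real.pi ^ (-a) :=
      mul_pos (Real.Gamma_pos_of_pos ha) (Real.rpow_pos_of_pos Real.pi_pos _)
    rw [enorm_zero, ENNReal.zero_rpow_of_neg (by linarith),
      ENNReal.mul_top (ENNReal.ofReal_pos.2 hconst).ne']
    exact le_top
  · have hr : 0 < Real.pi * ‖x‖ ^ 2 := by positivity
    rw [← ofReal_pi_mul_sq_norm_rpow_neg hx, ← lintegral_rpow_mul_exp_neg_mul_Ioi ha hr]
    exact (lintegral_congr fun b ↦ (ENNReal.ofReal_mul' (Real.exp_pos _).le).symm).le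

end GaussianSubordination

section RieszEnergy

variable {V F : Type*} [NormedAddCommGroup V] [InnerProductSpace ℝ V] [FiniteDimensional ℝ V]
  [MeasurableSpace V] [BorelSpace V]

lemma lintegral_rpow_mul_lintegral_gaussian_le {a : ℝ} (ha : 0 < a) (ν : Measure V) [SFinite ν] :
    ∫⁻ b in Ioi (0 : ℝ), ENNReal.ofReal (b ^ (a - 1)) *
        ∫⁻ x, ∫⁻ y, ENNReal.ofReal (Real.exp (-(Real.pi * ‖x - y‖ ^ 2 * b))) ∂ν ∂ν ≤
      ENNReal.ofReal (Real.Gamma a * Real.pi ^ (-a)) *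
        ∫⁻ x, ∫⁻ y, edist x y ^ (-(2 * a)) ∂ν ∂ν := by
  have hmeas : Measurable fun p : V × V ↦ edist p.1 p.2 ^ (-(2 * a)) := by fun_prop
  calc ∫⁻ b in Ioi (0 : ℝ), ENNReal.ofReal (b ^ (a - 1)) *
        ∫⁻ x, ∫⁻ y, ENNReal.ofReal (Real.exp (-(Real.pi * ‖x - y‖ ^ 2 * b))) ∂ν ∂ν
    _ = ∫⁻ b in Ioi (0 : ℝ), ∫⁻ p, ENNReal.ofReal (b ^ (a - 1)) *
        ENNReal.ofReal (Real.exp (-(Real.pi * ‖p.1 - p.2‖ ^ 2 * b))) ∂ν.prod ν := by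
      refine lintegral_congr fun b ↦ ?_
      rw [lintegral_const_mul _ (by fun_prop), lintegral_prod _ (by fun_prop)]
    _ = ∫⁻ p, (∫⁻ b in Ioi (0 : ℝ), ENNReal.ofReal (b ^ (a - 1)) *
        ENNReal.ofReal (Real.exp (-(Real.pi * ‖p.1 - p.2‖ ^ 2 * b)))) ∂ν.prod ν :=
      lintegral_lintegral_swap (by fun_prop)
    _ ≤ ∫⁻ p, ENNReal.ofReal (Real.Gamma a * Real.pi ^ (-a)) *
        edist p.1 p.2 ^ (-(2 * a)) ∂ν.prod ν :=
      lintegral_mono fun p ↦ edist_eq_enorm_sub p.1 p.2 ▸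
        lintegral_rpow_mul_gaussian_mul_le ha _
    _ = ENNReal.ofReal (Real.Gamma a * Real.pi ^ (-a)) *
        ∫⁻ x, ∫⁻ y, edist x y ^ (-(2 * a)) ∂ν ∂ν := by
      rw [lintegral_const_mul _ hmeas, lintegral_prod _ hmeas.aemeasurable]

lemma lintegral_mul_rpow_eq_lintegral_gaussian [Nontrivial V] {a : ℝ} (ha : 0 < a) {G : V → ℝ≥0∞}
    (hG : Measurable G) :
    ENNReal.ofReal (Real.Gamma a * Real.pi ^ (-a)) * ∫⁻ ξ, G ξ * ‖ξ‖ₑ ^ (-(2 * a)) =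
      ∫⁻ b in Ioi (0 : ℝ), ENNReal.ofReal (b ^ (-a - 1)) *
        ∫⁻ ξ, G ξ * ENNReal.ofReal (Real.exp (-(Real.pi * ‖ξ‖ ^ 2 / b))) := by
  calc ENNReal.ofReal (Real.Gamma a * Real.pi ^ (-a)) * ∫⁻ ξ, G ξ * ‖ξ‖ₑ ^ (-(2 * a))
    _ = ∫⁻ ξ, ∫⁻ b in Ioi (0 : ℝ), ENNReal.ofReal (b ^ (-a - 1)) *
        (G ξ * ENNReal.ofReal (Real.exp (-(Real.pi * ‖ξ‖ ^ 2 / b)))) := by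
      rw [← lintegral_const_mul' _ _ ENNReal.ofReal_ne_top]
      refine lintegral_congr_ae ?_
      filter_upwards [Measure.ae_ne volume (0 : V)] with ξ hξ
      rw [mul_left_comm, ← lintegral_rpow_mul_gaussian_div ha hξ,
        ← lintegral_const_mul _ (by fun_prop)]
      simp only [mul_left_comm]
    _ = ∫⁻ b in Ioi (0 : ℝ), ENNReal.ofReal (b ^ (-a - 1)) *
        ∫⁻ ξ, G ξ * ENNReal.ofReal (Real.exp (-(Real.pi * ‖ξ‖ ^ 2 / b))) := by
      rw [lintegral_lintegral_swap (by fun_prop)]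
      exact lintegral_congr fun b ↦ lintegral_const_mul _ (by fun_prop)

variable [NormedAddCommGroup F] [InnerProductSpace ℂ F] [CompleteSpace F]
  {μ : Measure V} [SigmaFinite μ] {f : V → F}

lemma lintegral_enorm_fourierDensity_sq_mul_rpow_le (hf : Integrable f μ) {s : ℝ} (hs : 0 < s)
    (hsn : s < Module.finrank ℝ V) :
    ENNReal.ofReal (Real.Gamma ((Module.finrank ℝ V - s) / 2) *
        Real.pi ^ (-((Module.finrank ℝ V - s) / 2))) *
        ∫⁻ ξ, ‖fourierDensity μ f ξ‖ₑ ^ 2 * ‖ξ‖ₑ ^ (s - Module.finrank ℝ V) ≤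
      ENNReal.ofReal (Real.Gamma (s / 2) * Real.pi ^ (-(s / 2))) *
        ∫⁻ x, ∫⁻ y, edist x y ^ (-s) ∂μ.withDensity (‖f ·‖ₑ) ∂μ.withDensity (‖f ·‖ₑ) := by
  have : Nontrivial V := Module.nontrivial_of_finrank_pos (R := ℝ) (by exact_mod_cast hs.trans hsn)
  have : IsFiniteMeasure (μ.withDensity (‖f ·‖ₑ)) := isFiniteMeasure_withDensity hf.2.ne
  have hmeas : Measurable fun ξ ↦ ‖fourierDensity μ f ξ‖ₑ ^ 2 :=
    (continuous_fourierDensity hf).enorm.measurable.pow_const 2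
  have hsubord := lintegral_mul_rpow_eq_lintegral_gaussian
    (show 0 < (Module.finrank ℝ V - s) / 2 by linarith) hmeas
  have henergy := lintegral_rpow_mul_lintegral_gaussian_le (half_pos hs) (μ.withDensity (‖f ·‖ₑ))
  rw [show -(2 * ((Module.finrank ℝ V - s) / 2)) = s - Module.finrank ℝ V by ring] at hsubord
  rw [mul_div_cancel₀ _ two_ne_zero] at henergy
  refine hsubord.trans_le (le_trans (setLIntegral_mono' measurableSet_Ioi fun b (hb : 0 < b) ↦ ?_)
    henergy)
  have hpow : b ^ (s / 2 - 1) = b ^ (-((Module.finrank ℝ V - s) / 2) - 1) *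
      b ^ (Module.finrank ℝ V / 2 : ℝ) := by
    rw [← Real.rpow_add hb]
    ring_nf
  rw [hpow, ENNReal.ofReal_mul (by positivity), mul_assoc]
  exact mul_right_mono (lintegral_enorm_fourierDensity_sq_mul_gaussian_le hf hb)

lemma lintegral_enorm_fourierDensity_sq_mul_rpow_lt_top (hf : Integrable f μ) {s : ℝ} (hs : 0 < s)
    (hsn : s < Module.finrank ℝ V)
    (henergy :
      ∫⁻ x, ∫⁻ y, edist x y ^ (-s) ∂μ.withDensity (‖f ·‖ₑ) ∂μ.withDensity (‖f ·‖ₑ) < ⊤) :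
    ∫⁻ ξ, ‖fourierDensity μ f ξ‖ₑ ^ 2 * ‖ξ‖ₑ ^ (s - Module.finrank ℝ V) < ⊤ := by
  have hriesz := (lintegral_enorm_fourierDensity_sq_mul_rpow_le hf hs hsn).trans_lt
    (ENNReal.mul_lt_top ENNReal.ofReal_lt_top henergy)
  have hconst : 0 < Real.Gamma ((Module.finrank ℝ V - s) / 2) *
      Real.pi ^ (-((Module.finrank ℝ V - s) / 2)) :=
    mul_pos (Real.Gamma_pos_of_pos (by linarith)) (Real.rpow_pos_of_pos Real.pi_pos _)
  exact ENNReal.lt_top_of_mul_ne_top_right hriesz.ne (ENNReal.ofReal_pos.2 hconst).ne'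

end RieszEnergy

section PolarCoordinates

variable {E : Type*} [NormedAddCommGroup E] [NormedSpace ℝ E] [FiniteDimensional ℝ E]
  [Nontrivial E] [MeasurableSpace E] [BorelSpace E] (μ : Measure E) [μ.IsAddHaarMeasure]

lemma lintegral_eq_lintegral_Ioi_sphere {H : E → ℝ≥0∞} (hH : Measurable H) :
    ∫⁻ ξ, H ξ ∂μ = ∫⁻ t in Ioi (0 : ℝ), ENNReal.ofReal (t ^ (Module.finrank ℝ E - 1)) *
      ∫⁻ ω : sphere (0 : E) 1, H (t • (ω : E)) ∂μ.toSphere := by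
  let P (p : sphere (0 : E) 1 × Ioi (0 : ℝ)) : ℝ≥0∞ := H ((p.2 : ℝ) • (p.1 : E))
  have hP : Measurable P := hH.comp (by fun_prop)
  have hinner : Measurable fun t : Ioi (0 : ℝ) ↦
      ∫⁻ ω : sphere (0 : E) 1, H ((t : ℝ) • (ω : E)) ∂μ.toSphere := hP.lintegral_prod_left'
  have hpolar (x : ({0}ᶜ : Set E)) : P (homeomorphUnitSphereProd E x) = H x := by
    have hx : ‖(x : E)‖ ≠ 0 := norm_ne_zero_iff.2 x.2
    simp only [P, homeomorphUnitSphereProd_apply_snd_coe, homeomorphUnitSphereProd_apply_fst_coe,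
      smul_inv_smul₀ hx]
  calc ∫⁻ ξ, H ξ ∂μ
    _ = ∫⁻ x : ({0}ᶜ : Set E), P (homeomorphUnitSphereProd E x) ∂μ.comap Subtype.val := by
      simp only [hpolar]
      rw [lintegral_subtype_comap (measurableSet_singleton _).compl, restrict_compl_singleton]
    _ = ∫⁻ p, P p ∂μ.toSphere.prod (Measure.volumeIoiPow (Module.finrank ℝ E - 1)) :=
      μ.measurePreserving_homeomorphUnitSphereProd.lintegral_comp hP
    _ = ∫⁻ t, ∫⁻ ω : sphere (0 : E) 1, H ((t : ℝ) • (ω : E)) ∂μ.toSphere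
        ∂Measure.volumeIoiPow (Module.finrank ℝ E - 1) := lintegral_prod_symm _ hP.aemeasurable
    _ = _ := by
      rw [Measure.volumeIoiPow, lintegral_withDensity_eq_lintegral_mul _ (by fun_prop) hinner,
        ← lintegral_subtype_comap measurableSet_Ioi]
      rfl

lemma lintegral_mul_rpow_norm_eq_lintegral_Ioi_sphere {G : E → ℝ≥0∞} (hG : Measurable G) (s : ℝ) :
    ∫⁻ ξ, G ξ * ‖ξ‖ₑ ^ (s - Module.finrank ℝ E) ∂μ =
      ∫⁻ t in Ioi (0 : ℝ), ENNReal.ofReal (t ^ (s - 1)) *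
        ∫⁻ ω : sphere (0 : E) 1, G (t • (ω : E)) ∂μ.toSphere := by
  rw [lintegral_eq_lintegral_Ioi_sphere μ (by fun_prop)]
  refine setLIntegral_congr_fun measurableSet_Ioi fun t (ht : 0 < t) ↦ ?_
  have hnorm (ω : sphere (0 : E) 1) : ‖t • (ω : E)‖ₑ ^ (s - Module.finrank ℝ E) =
      ENNReal.ofReal (t ^ (s - Module.finrank ℝ E)) := by
    rw [← ofReal_norm, norm_smul, norm_eq_of_mem_sphere, Real.norm_of_nonneg ht.le, mul_one,
      ENNReal.ofReal_rpow_of_pos ht]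
  have hpow : t ^ (s - 1) = t ^ (Module.finrank ℝ E - 1) * t ^ (s - Module.finrank ℝ E) := by
    rw [← Real.rpow_natCast, ← Real.rpow_add ht, Nat.cast_sub Module.finrank_pos]
    congr 1
    push_cast
    ring
  simp only [hnorm]
  rw [lintegral_mul_const' _ _ ENNReal.ofReal_ne_top, hpow, ENNReal.ofReal_mul (by positivity),
    mul_assoc, mul_comm (ENNReal.ofReal (t ^ (s - _)))]

end PolarCoordinates

section Sobolev

variable {F : Type*} [NormedAddCommGroup F] [InnerProductSpace ℝ F] {g g' : ℝ → F}

-- Integrate the derivative of `u ↦ (t + 1 - u) * ‖g u‖ ^ 2` over `[t, t + 1]`.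
lemma sq_norm_le_intervalIntegral_of_hasDerivAt (hg : ∀ u, HasDerivAt g (g' u) u)
    (hg' : Continuous g') (t : ℝ) :
    ‖g t‖ ^ 2 ≤ ∫ u in t..t + 1, (2 * ‖g u‖ ^ 2 + ‖g' u‖ ^ 2) := by
  have hcont : Continuous g := continuous_iff_continuousAt.2 fun u ↦ (hg u).continuousAt
  have hderiv (u : ℝ) : HasDerivAt (fun u ↦ -((t + 1 - u) * ‖g u‖ ^ 2))
      (‖g u‖ ^ 2 - (t + 1 - u) * (2 * inner ℝ (g u) (g' u))) u := by
    convert! (((hasDerivAt_id u).const_sub (t + 1)).mul (hg u).norm_sq).neg using 1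
    simp only [id_eq]
    ring
  have hbound {u : ℝ} (hu : u ∈ Ioo t (t + 1)) :
      ‖g u‖ ^ 2 - (t + 1 - u) * (2 * inner ℝ (g u) (g' u)) ≤ 2 * ‖g u‖ ^ 2 + ‖g' u‖ ^ 2 := by
    have hinner : -inner ℝ (g u) (g' u) ≤ ‖g u‖ * ‖g' u‖ :=
      (neg_le_abs _).trans (abs_real_inner_le_norm _ _)
    have hweight : (t + 1 - u) * -inner ℝ (g u) (g' u) ≤ ‖g u‖ * ‖g' u‖ :=
      (mul_le_mul_of_nonneg_left hinner (by linarith [hu.2])).trans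
        (mul_le_of_le_one_left (by positivity) (by linarith [hu.1]))
    nlinarith [two_mul_le_add_sq ‖g u‖ ‖g' u‖]
  have hftc := intervalIntegral.sub_le_integral_of_hasDeriv_right_of_le (lt_add_one t).le
    (fun u _ ↦ (hderiv u).continuousAt.continuousWithinAt)
    (fun u _ ↦ (hderiv u).hasDerivWithinAt)
    (φ := fun u ↦ 2 * ‖g u‖ ^ 2 + ‖g' u‖ ^ 2)
    ((by fun_prop : Continuous _).integrableOn_Icc) (fun u hu ↦ hbound hu)
  simpa using hftc

lemma sq_enorm_le_lintegral_of_hasDerivAt (hg : ∀ u, HasDerivAt g (g' u) u)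
    (hg' : Continuous g') (t : ℝ) :
    ‖g t‖ₑ ^ 2 ≤ ∫⁻ u in Ioc t (t + 1), (2 * ‖g u‖ₑ ^ 2 + ‖g' u‖ₑ ^ 2) := by
  have hcont : Continuous g := continuous_iff_continuousAt.2 fun u ↦ (hg u).continuousAt
  have hint : IntegrableOn (fun u ↦ 2 * ‖g u‖ ^ 2 + ‖g' u‖ ^ 2) (Ioc t (t + 1)) :=
    (by fun_prop : Continuous _).integrableOn_Ioc
  calc ‖g t‖ₑ ^ 2
    _ = ENNReal.ofReal (‖g t‖ ^ 2) := by rw [ENNReal.ofReal_pow (norm_nonneg _), ofReal_norm]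
    _ ≤ ENNReal.ofReal (∫ u in t..t + 1, (2 * ‖g u‖ ^ 2 + ‖g' u‖ ^ 2)) :=
      ENNReal.ofReal_le_ofReal (sq_norm_le_intervalIntegral_of_hasDerivAt hg hg' t)
    _ = ∫⁻ u in Ioc t (t + 1), ENNReal.ofReal (2 * ‖g u‖ ^ 2 + ‖g' u‖ ^ 2) := by
      rw [intervalIntegral.integral_of_le (lt_add_one t).le,
        ofReal_integral_eq_lintegral_ofReal hint (.of_forall fun u ↦ by positivity)]
    _ = ∫⁻ u in Ioc t (t + 1), (2 * ‖g u‖ₑ ^ 2 + ‖g' u‖ₑ ^ 2) := by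
      refine lintegral_congr fun u ↦ ?_
      rw [ENNReal.ofReal_add (by positivity) (by positivity), ENNReal.ofReal_mul zero_le_two,
        ENNReal.ofReal_pow (norm_nonneg _), ENNReal.ofReal_pow (norm_nonneg _), ofReal_norm,
        ofReal_norm, ENNReal.ofReal_ofNat]

end Sobolev

section SphericalDecay

variable {S Φ : ℝ → ℝ≥0∞} {p : ℝ}

lemma rpow_mul_le_lintegral_of_le_lintegral_Ioc (hp : 0 ≤ p)
    (hS : ∀ t, S t ≤ ∫⁻ u in Ioc t (t + 1), Φ u) {t : ℝ} (ht : 0 < t) :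
    ENNReal.ofReal (t ^ p) * S t ≤ ∫⁻ u in Ioi (0 : ℝ), ENNReal.ofReal (u ^ p) * Φ u := by
  calc ENNReal.ofReal (t ^ p) * S t
    _ ≤ ENNReal.ofReal (t ^ p) * ∫⁻ u in Ioc t (t + 1), Φ u := mul_right_mono (hS t)
    _ = ∫⁻ u in Ioc t (t + 1), ENNReal.ofReal (t ^ p) * Φ u :=
      (lintegral_const_mul' _ _ ENNReal.ofReal_ne_top).symm
    _ ≤ ∫⁻ u in Ioc t (t + 1), ENNReal.ofReal (u ^ p) * Φ u := by
      refine setLIntegral_mono' measurableSet_Ioc fun u hu ↦ ?_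
      gcongr
      exact hu.1.le
    _ ≤ ∫⁻ u in Ioi (0 : ℝ), ENNReal.ofReal (u ^ p) * Φ u :=
      lintegral_mono_set fun u hu ↦ ht.trans hu.1

lemma lintegral_sq_mul_rpow_lt_top {B : ℝ≥0∞} (hB : B ≠ ⊤) {m : ℝ} (hm : 0 ≤ m)
    (hmp : m ≤ 2 * p) (hSB : ∀ t, S t ≤ B) (hSΦ : ∀ t, S t ≤ Φ t)
    (hS : ∀ t, S t ≤ ∫⁻ u in Ioc t (t + 1), Φ u)
    (hΦ : ∫⁻ t in Ioi (0 : ℝ), ENNReal.ofReal (t ^ p) * Φ t < ⊤) :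
    ∫⁻ t in Ioi (0 : ℝ), S t ^ 2 * ENNReal.ofReal (t ^ m) < ⊤ := by
  set A := ∫⁻ t in Ioi (0 : ℝ), ENNReal.ofReal (t ^ p) * Φ t
  have hsmall {t : ℝ} (ht : 0 < t) (ht1 : t ≤ 1) : S t ^ 2 * ENNReal.ofReal (t ^ m) ≤ B ^ 2 := by
    refine (mul_le_of_le_one_right' ?_).trans (pow_le_pow_left₀ zero_le (hSB t) 2)
    exact ENNReal.ofReal_le_one.2 (Real.rpow_le_one ht.le ht1 hm)
  have hlarge {t : ℝ} (ht : 1 < t) :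
      S t ^ 2 * ENNReal.ofReal (t ^ m) ≤ A * (ENNReal.ofReal (t ^ p) * Φ t) := by
    calc S t ^ 2 * ENNReal.ofReal (t ^ m)
      _ ≤ S t ^ 2 * ENNReal.ofReal (t ^ p * t ^ p) := by
        rw [← Real.rpow_add (by linarith)]
        gcongr
        · exact ht.le
        · linarith
      _ = (ENNReal.ofReal (t ^ p) * S t) * (ENNReal.ofReal (t ^ p) * S t) := by
        rw [ENNReal.ofReal_mul (by positivity)]
        ring
      _ ≤ A * (ENNReal.ofReal (t ^ p) * Φ t) :=
        mul_le_mul' (rpow_mul_le_lintegral_of_le_lintegral_Ioc (by linarith) hS (by linarith))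
          (mul_right_mono (hSΦ t))
  calc ∫⁻ t in Ioi (0 : ℝ), S t ^ 2 * ENNReal.ofReal (t ^ m)
    _ ≤ (∫⁻ t in Ioc (0 : ℝ) 1, S t ^ 2 * ENNReal.ofReal (t ^ m)) +
        ∫⁻ t in Ioi (1 : ℝ), S t ^ 2 * ENNReal.ofReal (t ^ m) := by
      rw [← Ioc_union_Ioi_eq_Ioi zero_le_one]
      exact lintegral_union_le _ _ _
    _ ≤ (∫⁻ _ in Ioc (0 : ℝ) 1, B ^ 2) +
        ∫⁻ t in Ioi (1 : ℝ), A * (ENNReal.ofReal (t ^ p) * Φ t) :=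
      add_le_add (setLIntegral_mono' measurableSet_Ioc fun t ht ↦ hsmall ht.1 ht.2)
        (setLIntegral_mono' measurableSet_Ioi fun t ht ↦ hlarge ht)
    _ ≤ B ^ 2 + A * A := by
      rw [setLIntegral_const, Real.volume_Ioc, lintegral_const_mul' _ _ hΦ.ne]
      gcongr
      · norm_num
      · exact lintegral_mono_set (Ioi_subset_Ioi zero_le_one)
    _ < ⊤ := ENNReal.add_lt_top.2
      ⟨(ENNReal.pow_ne_top hB).lt_top, ENNReal.mul_lt_top hΦ hΦ⟩

end SphericalDecay

section CompactSupport

variable {E : Type*} [NormedAddCommGroup E] [MeasurableSpace E] {μ : Measure E} {K : Set E}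

lemma exists_ae_norm_le_of_isCompact (hK : IsCompact K) (hsupp : μ Kᶜ = 0) :
    ∃ R, ∀ᵐ x ∂μ, ‖x‖ ≤ R := by
  obtain ⟨R, hR⟩ := hK.isBounded.exists_norm_le
  exact ⟨R, (measure_eq_zero_iff_ae_notMem.1 hsupp).mono fun x hx ↦ hR x (notMem_compl_iff.1 hx)⟩

lemma integrable_norm_of_isCompact [OpensMeasurableSpace E] [IsFiniteMeasure μ] (hK : IsCompact K)
    (hsupp : μ Kᶜ = 0) : Integrable (fun x ↦ ‖x‖) μ := by
  obtain ⟨R, hR⟩ := exists_ae_norm_le_of_isCompact hK hsupp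
  exact .of_bound measurable_norm.aestronglyMeasurable R (by simpa only [norm_norm] using hR)

end CompactSupport

section Energy

variable {d : ℕ} {μ : Measure (Pt d)}

lemma energy_lt_top_of_le [IsFiniteMeasure μ] {s s' : ℝ} (hs' : 0 < s') (hss' : s' ≤ s)
    (hs : energy d s μ < ⊤) : energy d s' μ < ⊤ := by
  have hkernel (x y : Pt d) : edist x y ^ (-s') ≤ 1 + edist x y ^ (-s) := by
    rcases le_total (edist x y) 1 with h | h
    · exact (ENNReal.rpow_le_rpow_of_exponent_ge h (neg_le_neg hss')).trans le_add_self
    · exact (ENNReal.rpow_le_one_of_one_le_of_neg h (neg_neg_of_pos hs')).trans le_self_add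
  calc energy d s' μ
    _ ≤ ∫⁻ x, ∫⁻ y, (1 + edist x y ^ (-s)) ∂μ ∂μ :=
      lintegral_mono fun x ↦ lintegral_mono fun y ↦ hkernel x y
    _ = μ univ ^ 2 + energy d s μ := by
      simp only [lintegral_add_left measurable_const, lintegral_const, one_mul, energy, sq]
    _ < ⊤ := ENNReal.add_lt_top.2 ⟨ENNReal.pow_lt_top (measure_lt_top μ univ), hs⟩

lemma energy_withDensity_lt_top {s : ℝ} {w : Pt d → ℝ≥0∞} {M : ℝ≥0∞} (hM : M ≠ ⊤)
    (hw : ∀ᵐ x ∂μ, w x ≤ M) (hs : energy d s μ < ⊤) : energy d s (μ.withDensity w) < ⊤ := by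
  have hle : μ.withDensity w ≤ M • μ := (withDensity_mono hw).trans_eq (withDensity_const M)
  calc energy d s (μ.withDensity w)
    _ ≤ ∫⁻ x, ∫⁻ y, edist x y ^ (-s) ∂(M • μ) ∂(M • μ) :=
      lintegral_mono' hle fun x ↦ lintegral_mono' hle le_rfl
    _ = M * (M * energy d s μ) := by
      simp only [lintegral_smul_measure, smul_eq_mul, lintegral_const_mul' _ _ hM, energy]
    _ < ⊤ := ENNReal.mul_lt_top hM.lt_top (ENNReal.mul_lt_top hM.lt_top hs)

lemma energy_withDensity_enorm_lt_top {K : Set (Pt d)} (hK : IsCompact K) (hsupp : μ Kᶜ = 0)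
    {s : ℝ} (hs : energy d s μ < ⊤) : energy d s (μ.withDensity (‖·‖ₑ)) < ⊤ := by
  obtain ⟨R, hR⟩ := exists_ae_norm_le_of_isCompact hK hsupp
  refine energy_withDensity_lt_top (M := ENNReal.ofReal R) ENNReal.ofReal_ne_top ?_ hs
  exact hR.mono fun x hx ↦ by simpa only [ofReal_norm] using ENNReal.ofReal_le_ofReal hx

end Energy

section RadialDerivative

variable {d : ℕ}

/-- The inclusion `ℝ^d → ℂ^d` of real vectors into complex Hilbert space, as a linear isometry. It
serves as a vector-valued density whose Fourier transform is the gradient of `μ̂` up to a factor. -/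
def complexify (d : ℕ) : Pt d →ₗᵢ[ℝ] EuclideanSpace ℂ (Fin d) where
  toFun x := WithLp.toLp 2 fun i ↦ (x i : ℂ)
  map_add' x y := by ext i; simp
  map_smul' c x := by ext i; simp
  norm_map' x := by simp [EuclideanSpace.norm_eq]

lemma inner_complexify (x y : Pt d) :
    inner ℂ (complexify d x) (complexify d y) = (⟪x, y⟫ : ℂ) := by
  simp [complexify, PiLp.inner_apply]

lemma ftM_eq_fourierDensity (μ : Measure (Pt d)) : ftM d μ = fourierDensity μ fun _ ↦ (1 : ℂ) := by
  ext ξ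
  simp only [ftM, fourierDensity, VectorFourier.fourierIntegral, Circle.smul_def, smul_eq_mul,
    mul_one, Real.fourierChar_apply, innerₗ_apply_apply, mul_neg]

variable {μ : Measure (Pt d)} [IsFiniteMeasure μ]

lemma hasDerivAt_ftM_smul (hμ : Integrable (complexify d) μ) (ω : Pt d) (u : ℝ) :
    HasDerivAt (fun u : ℝ ↦ ftM d μ (u • ω))
      (-(2 * Real.pi * Complex.I) *
        inner ℂ (complexify d ω) (fourierDensity μ (complexify d) (u • ω))) u := by
  have hnorm : Integrable (fun x : Pt d ↦ ‖x‖ * ‖(1 : ℂ)‖) μ := by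
    simpa only [norm_one, mul_one, LinearIsometry.norm_map] using hμ.norm
  have hderiv := hasDerivAt_fourierDensity_smul (integrable_const (1 : ℂ)) hnorm ω u
  rw [← ftM_eq_fourierDensity] at hderiv
  convert! hderiv using 1
  simp only [inner_fourierDensity hμ, inner_complexify, real_inner_comm, Complex.real_smul,
    mul_one, smul_eq_mul]

end RadialDerivative

section SphericalAverage

variable {d : ℕ} {μ : Measure (Pt d)}

/-- The weighted sum `2 |μ̂|² + |∇μ̂|²` of squares, with `∇μ̂ = -2πi (xμ)^`. Its integral along a
segment of length one issuing from `ξ` controls `|μ̂(ξ)|²`. -/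
def sobolevDensity (μ : Measure (Pt d)) (ξ : Pt d) : ℝ≥0∞ :=
  2 * ‖ftM d μ ξ‖ₑ ^ 2 + (ENNReal.ofReal (2 * Real.pi) * ‖fourierDensity μ (complexify d) ξ‖ₑ) ^ 2

lemma sphAvg_le_measure_univ (t : ℝ) : sphAvg d μ t ≤ μ univ ^ 2 * sphM d univ := by
  have hbound (ξ : Pt d) : ‖ftM d μ ξ‖ₑ ≤ μ univ := by
    rw [ftM_eq_fourierDensity]
    simpa only [enorm_one, lintegral_one] using enorm_fourierDensity_le μ (fun _ ↦ (1 : ℂ)) ξ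
  exact (lintegral_mono fun ω ↦ pow_le_pow_left₀ zero_le (hbound _) 2).trans_eq
    (lintegral_const _)

lemma sphAvg_le_lintegral_sobolevDensity (t : ℝ) :
    sphAvg d μ t ≤ ∫⁻ ω, sobolevDensity μ (t • (ω : Pt d)) ∂sphM d :=
  lintegral_mono fun _ ↦ (le_mul_of_one_le_left' one_le_two).trans le_self_add

variable [IsFiniteMeasure μ]

lemma continuous_ftM : Continuous (ftM d μ) := by
  rw [ftM_eq_fourierDensity]
  exact continuous_fourierDensity (integrable_const _)

lemma measurable_sobolevDensity (hμ : Integrable (complexify d) μ) :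
    Measurable (sobolevDensity μ) := by
  have hftM := (continuous_ftM (μ := μ)).measurable
  have hgrad := (continuous_fourierDensity hμ).measurable
  unfold sobolevDensity
  fun_prop

lemma sq_enorm_ftM_smul_le_lintegral (hμ : Integrable (complexify d) μ)
    (ω : sphere (0 : Pt d) 1) (t : ℝ) :
    ‖ftM d μ (t • (ω : Pt d))‖ₑ ^ 2 ≤
      ∫⁻ u in Ioc t (t + 1), sobolevDensity μ (u • (ω : Pt d)) := by
  let g' (u : ℝ) : ℂ := -(2 * Real.pi * Complex.I) *
    inner ℂ (complexify d ω) (fourierDensity μ (complexify d) (u • (ω : Pt d)))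
  have hcont : Continuous g' := by
    have := continuous_fourierDensity hμ
    fun_prop
  have hbound (u : ℝ) : ‖g' u‖ₑ ≤
      ENNReal.ofReal (2 * Real.pi) * ‖fourierDensity μ (complexify d) (u • (ω : Pt d))‖ₑ := by
    rw [← ofReal_norm, ← ofReal_norm, ← ENNReal.ofReal_mul Real.two_pi_pos.le]
    refine ENNReal.ofReal_le_ofReal ?_
    have hcauchy := norm_inner_le_norm (𝕜 := ℂ) (complexify d ω)
      (fourierDensity μ (complexify d) (u • (ω : Pt d)))
    rw [LinearIsometry.norm_map, norm_eq_of_mem_sphere, one_mul] at hcauchy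
    calc ‖g' u‖
      _ = 2 * Real.pi * ‖inner ℂ (complexify d ω)
          (fourierDensity μ (complexify d) (u • (ω : Pt d)))‖ := by
        simp [g', abs_of_pos Real.pi_pos]
      _ ≤ 2 * Real.pi * ‖fourierDensity μ (complexify d) (u • (ω : Pt d))‖ := by gcongr
  calc ‖ftM d μ (t • (ω : Pt d))‖ₑ ^ 2
    _ ≤ ∫⁻ u in Ioc t (t + 1), (2 * ‖ftM d μ (u • (ω : Pt d))‖ₑ ^ 2 + ‖g' u‖ₑ ^ 2) :=
      sq_enorm_le_lintegral_of_hasDerivAt (fun u ↦ hasDerivAt_ftM_smul hμ ω u) hcont t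
    _ ≤ ∫⁻ u in Ioc t (t + 1), sobolevDensity μ (u • (ω : Pt d)) :=
      lintegral_mono fun u ↦ add_le_add_right (pow_le_pow_left₀ zero_le (hbound u) 2) _

lemma sphAvg_le_lintegral_Ioc (hμ : Integrable (complexify d) μ) (t : ℝ) :
    sphAvg d μ t ≤
      ∫⁻ u in Ioc t (t + 1), ∫⁻ ω, sobolevDensity μ (u • (ω : Pt d)) ∂sphM d := by
  have : IsFiniteMeasure (sphM d) := inferInstanceAs (IsFiniteMeasure (Measure.toSphere _))
  have hmeas : Measurable fun p : ℝ × sphere (0 : Pt d) 1 ↦ sobolevDensity μ (p.1 • (p.2 : Pt d)) :=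
    (measurable_sobolevDensity hμ).comp (by fun_prop)
  rw [lintegral_lintegral_swap hmeas.aemeasurable]
  exact lintegral_mono fun ω ↦ sq_enorm_ftM_smul_le_lintegral hμ ω t

lemma lintegral_sobolevDensity_mul_rpow_lt_top {s : ℝ} (hs : 0 < s) (hsd : s < d)
    (hμ : Integrable (complexify d) μ) (henergy : energy d s μ < ⊤)
    (henergy' : energy d s (μ.withDensity (‖·‖ₑ)) < ⊤) :
    ∫⁻ ξ, sobolevDensity μ ξ * ‖ξ‖ₑ ^ (s - d) < ⊤ := by
  have hftM : ∫⁻ ξ, ‖ftM d μ ξ‖ₑ ^ 2 * ‖ξ‖ₑ ^ (s - d) < ⊤ := by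
    rw [ftM_eq_fourierDensity]
    simpa using lintegral_enorm_fourierDensity_sq_mul_rpow_lt_top
      (integrable_const (1 : ℂ) (μ := μ)) hs (by simpa using hsd) (by simpa [energy] using henergy)
  have hgrad : ∫⁻ ξ, ‖fourierDensity μ (complexify d) ξ‖ₑ ^ 2 * ‖ξ‖ₑ ^ (s - d) < ⊤ := by
    simpa using lintegral_enorm_fourierDensity_sq_mul_rpow_lt_top hμ hs (by simpa using hsd)
      (by simpa [energy] using henergy')
  have hmeas := (continuous_ftM (μ := μ)).measurable
  simp only [sobolevDensity, add_mul, mul_pow, mul_assoc]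
  rw [lintegral_add_left (by fun_prop), lintegral_const_mul' _ _ ENNReal.ofNat_ne_top,
    lintegral_const_mul' _ _ (ENNReal.pow_ne_top ENNReal.ofReal_ne_top)]
  exact ENNReal.add_lt_top.2 ⟨ENNReal.mul_lt_top ENNReal.ofNat_lt_top hftM,
    ENNReal.mul_lt_top (ENNReal.pow_lt_top ENNReal.ofReal_lt_top) hgrad⟩

end SphericalAverage

section Mattila

variable {d : ℕ} {μ : Measure (Pt d)} [IsFiniteMeasure μ]

lemma mattila_lt_top_of_energy_lt_top {s : ℝ} (hs : ((d : ℝ) + 1) / 2 ≤ s) (hsd : s < d)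
    (hμ : Integrable (complexify d) μ) (henergy : energy d s μ < ⊤)
    (henergy' : energy d s (μ.withDensity (‖·‖ₑ)) < ⊤) : mattila d μ < ⊤ := by
  have hd : (1 : ℝ) < d := by linarith
  have : Nonempty (Fin d) := ⟨⟨0, by exact_mod_cast zero_lt_one.trans hd⟩⟩
  have : IsFiniteMeasure (sphM d) := inferInstanceAs (IsFiniteMeasure (Measure.toSphere _))
  have hweighted := lintegral_sobolevDensity_mul_rpow_lt_top (by linarith) hsd hμ henergy henergy'
  have hpolar := lintegral_mul_rpow_norm_eq_lintegral_Ioi_sphere volume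
    (measurable_sobolevDensity hμ) s
  rw [finrank_euclideanSpace_fin] at hpolar
  exact lintegral_sq_mul_rpow_lt_top
    (ENNReal.mul_ne_top (ENNReal.pow_ne_top (measure_ne_top μ univ)) (measure_ne_top _ univ))
    (by linarith) (by linarith) sphAvg_le_measure_univ sphAvg_le_lintegral_sobolevDensity
    (sphAvg_le_lintegral_Ioc hμ) (hpolar ▸ hweighted)

end Mattila

theorem stmt14_general (d : ℕ) (hd : 2 ≤ d) (μ : Measure (Pt d)) [IsFiniteMeasure μ]
    (hμ : Integrable (fun x ↦ ‖x‖) μ) (s : ℝ) (hs : ((d : ℝ) + 1) / 2 ≤ s)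
    (hI : energy d s μ < ⊤) (hI' : energy d s (μ.withDensity (‖·‖ₑ)) < ⊤) :
    mattila d μ < ⊤ := by
  have : (2 : ℝ) ≤ d := by exact_mod_cast hd
  have hpos : 0 < ((d : ℝ) + 1) / 2 := by positivity
  have hμ' : Integrable (complexify d) μ := by
    refine (integrable_norm_iff (complexify d).continuous.aestronglyMeasurable).1 ?_
    simpa only [LinearIsometry.norm_map] using hμ
  have : IsFiniteMeasure (μ.withDensity (‖·‖ₑ)) :=
    isFiniteMeasure_withDensity (by simpa only [enorm_norm] using hμ.2.ne)
  exact mattila_lt_top_of_energy_lt_top le_rfl (by linarith) hμ'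
    (energy_lt_top_of_le hpos hs hI) (energy_lt_top_of_le hpos hs hI')

theorem stmt14 (d : ℕ) (hd : 2 ≤ d)
    (μ : Measure (Pt d)) [IsFiniteMeasure μ]
    (K : Set (Pt d)) (hK : IsCompact K) (hsupp : μ Kᶜ = 0)
    (s : ℝ) (hs : ((d : ℝ) + 1) / 2 < s) (hI : energy d s μ < ⊤) :
    mattila d μ < ⊤ :=
  stmt14_general d hd μ (integrable_norm_of_isCompact hK hsupp) s hs.le hI
    (energy_withDensity_enorm_lt_top hK hsupp hI)
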